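/- Variational principle for the pressure: let θ ∈ (0,1/2], A : X → ℝ normalized Lipschitz, V : X → ℝ Lipschitz, and suppose λ ∈ ℝ and a Lipschitz F ∈ C(X,ℝ) with F > 0 satisfy 𝓛_A F = (1 − V + λ)·F pointwise; set γ_V := 1 − V + λ and B_V := A + log F − log F∘σ − log γ_V∘σ. Let Ã : X → ℝ be any normalized Lipschitz potential, γ̃ : X → ℝ any continuous strictly positive function, μ_Ã a Borel probability with ∫𝓛_Ã g dμ_Ã = ∫g dμ_Ã for all g ∈ C(X,ℝ), and let μ_{Ã,γ̃} be the probability with density (1/γ̃)/∫(1/γ̃)dμ_Ã with respect to μ_Ã. Define the relative entropy H(Ã,γ̃) := ∫ (γ̃ − 1) dμ_{Ã,γ̃} + ∫ γ̃·( A − Ã − log(γ̃∘σ) ) dμ_{Ã,γ̃}. Then H(Ã,γ̃) + ∫ V dμ_{Ã,γ̃} ≤ λ, and equality holds for Ã = B_V and γ̃ = γ_V. Hence the pressure P(V) := sup over all such pairs (Ã, γ̃) of H(Ã,γ̃) + ∫V dμ_{Ã,γ̃} equals λ. -/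

import Mathlib

/-!
Write `X = ℕ → Fin d` and `γ_V = 1 - V + λ`. The eigenvalue equation forces `γ_V > 0` and makes
`B_V` a normalized potential. Since `μ_{Ã,γ̃}` has density proportional to `1/γ̃`, the difference
`H(Ã,γ̃) + ∫ V dμ_{Ã,γ̃} - λ` is a positive multiple of
`∫ (1 - γ_V/γ̃ + A - Ã - log γ̃∘σ) dμ_Ã` (`relEnt_add_integral_sub`).

A fixed point of the dual of a normalized Ruelle operator is shift invariant
(`integral_comp_shift`), so coboundaries `φ∘σ - φ` integrate to zero. Together with
`1 - r ≤ -log r` for `r = γ_V/γ̃`, this bounds the integral by `∫ (B_V - Ã) dμ_Ã`. That is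
`∫ 𝓛_Ã (B_V - Ã) dμ_Ã`, and it is nonpositive by `t ≤ e^t - 1`: this is the nonnegativity of the
relative entropy of the probability vectors `e^{Ã(ax)}` and `e^{B_V(ax)}`. For
`(Ã, γ̃) = (B_V, γ_V)` the integrand is exactly the coboundary of `log F`, whence equality.

The supremum is attained because a fixed probability of the dual of `𝓛_{B_V}` exists
(`exists_invariant_probability`). It is obtained by the Krylov–Bogoliubov argument: an
ultrafilter limit of the Cesàro means of `k ↦ (𝓛^k g)(x₀)` is a positive functional, which is
represented by a measure through the Riesz–Markov–Kakutani theorem.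
-/

open MeasureTheory Filter

noncomputable section

/-- The concatenation `a·x`: `(ax)(0) = a`, `(ax)(n+1) = x n`. -/
def cons {d : ℕ} (a : Fin d) (x : ℕ → Fin d) : ℕ → Fin d
  | 0 => a
  | n + 1 => x n

/-- The shift map `σ` on the Bernoulli space. -/
def shift {d : ℕ} (x : ℕ → Fin d) : ℕ → Fin d := fun n => x (n + 1)

open Classical in
/-- The metric `d_θ` on the Bernoulli space: `d_θ(x,y) = θ^{min{n : x n ≠ y n}}` for `x ≠ y`. -/
def distTheta {d : ℕ} (θ : ℝ) (x y : ℕ → Fin d) : ℝ :=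
  if x = y then 0 else θ ^ sInf {n : ℕ | x n ≠ y n}

/-- The Ruelle operator with potential `B`, applied pointwise:
`(𝓛_B g)(x) = Σ_{a} e^{B(ax)} g(ax)`. -/
def ruelleSum {d : ℕ} (B : (ℕ → Fin d) → ℝ) (g : (ℕ → Fin d) → ℝ) (x : ℕ → Fin d) : ℝ :=
  ∑ a : Fin d, Real.exp (B (cons a x)) * g (cons a x)

/-- The exponential `e^B` of a bounded operator `B` on `C(X,ℝ)`, applied to `f`:
`e^B f = Σ_{n=0}^∞ (1/n!) Bⁿ f`. -/
def opExp {X : Type*} [TopologicalSpace X] [CompactSpace X]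
    (B : C(X, ℝ) →L[ℝ] C(X, ℝ)) (f : C(X, ℝ)) : C(X, ℝ) :=
  ∑' n : ℕ, ((Nat.factorial n : ℝ)⁻¹ • (B ^ n) f)

/-- `γ_V = 1 - V + λ`. -/
def gammaV {d : ℕ} (V : (ℕ → Fin d) → ℝ) (lam : ℝ) (x : ℕ → Fin d) : ℝ := 1 - V x + lam

/-- `B_V = A + log F - log F∘σ - log γ_V∘σ`. -/
def BV {d : ℕ} (A V : (ℕ → Fin d) → ℝ) (lam : ℝ) (F : (ℕ → Fin d) → ℝ)
    (y : ℕ → Fin d) : ℝ :=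
  A y + Real.log (F y) - Real.log (F (shift y)) - Real.log (gammaV V lam (shift y))

/-- The relative entropy `H(Ã,γ̃)` of the chain with jump rates `γ̃`, jump probabilities `e^{Ã}`
 and stationary measure `μ₂ = μ_{Ã,γ̃}`, with respect to the a priori chain of `A`. -/
def relEnt {d : ℕ} (A At γt : (ℕ → Fin d) → ℝ) (μ2 : Measure (ℕ → Fin d)) : ℝ :=
  ∫ x, (γt x - 1) ∂μ2 + ∫ x, γt x * (A x - At x - Real.log (γt (shift x))) ∂μ2

/-! ### The metric `d_θ` and continuity -/

lemma distTheta_le_pow {d : ℕ} {θ : ℝ} (hθ0 : 0 < θ) (hθ1 : θ ≤ 1) {x y : ℕ → Fin d} {n : ℕ}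
    (h : ∀ i < n, x i = y i) : distTheta θ x y ≤ θ ^ n := by
  unfold distTheta
  split_ifs with hxy
  · positivity
  · apply pow_le_pow_of_le_one hθ0.le hθ1
    have hne : {n : ℕ | x n ≠ y n}.Nonempty := Function.ne_iff.mp hxy
    by_contra hlt
    exact Nat.sInf_mem hne (h _ (not_le.mp hlt))

lemma distTheta_nonneg {d : ℕ} {θ : ℝ} (hθ0 : 0 < θ) (x y : ℕ → Fin d) :
    0 ≤ distTheta θ x y := by
  unfold distTheta
  split_ifs <;> positivity

lemma distTheta_shift_le {d : ℕ} {θ : ℝ} (hθ0 : 0 < θ) (hθ1 : θ ≤ 1) (x y : ℕ → Fin d) :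
    distTheta θ (shift x) (shift y) ≤ θ⁻¹ * distTheta θ x y := by
  by_cases h : shift x = shift y
  · have := distTheta_nonneg hθ0 x y
    rw [distTheta, if_pos h]
    positivity
  · have hxy : x ≠ y := fun e => h (by rw [e])
    rw [distTheta, if_neg h, distTheta, if_neg hxy]
    have hne : {n : ℕ | shift x n ≠ shift y n}.Nonempty := Function.ne_iff.mp h
    have hmem := Nat.sInf_mem hne
    have hle : sInf {n : ℕ | x n ≠ y n} ≤ sInf {n : ℕ | shift x n ≠ shift y n} + 1 :=
      Nat.sInf_le hmem
    have := pow_le_pow_of_le_one hθ0.le hθ1 hle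
    rw [pow_succ] at this
    rw [inv_mul_eq_div, le_div_iff₀ hθ0]
    exact this

lemma continuous_of_distTheta {d : ℕ} {θ : ℝ} (hθ0 : 0 < θ) (hθ1 : θ < 1)
    {g : (ℕ → Fin d) → ℝ} {C : ℝ} (h : ∀ x y, |g x - g y| ≤ C * distTheta θ x y) :
    Continuous g := by
  rw [continuous_iff_continuousAt]
  intro x
  rw [ContinuousAt, Metric.tendsto_nhds]
  intro ε hε
  have hlim : Tendsto (fun n : ℕ => |C| * θ ^ n) atTop (nhds (|C| * 0)) :=
    (tendsto_pow_atTop_nhds_zero_of_lt_one hθ0.le hθ1).const_mul _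
  rw [mul_zero] at hlim
  obtain ⟨n, hn⟩ := (hlim.eventually (gt_mem_nhds hε)).exists
  have hev : ∀ᶠ y in nhds x, ∀ i ∈ Set.Iio n, y i = x i := by
    rw [Filter.eventually_all_finite (Set.finite_Iio n)]
    intro i _
    have hc : Tendsto (fun y : ℕ → Fin d => y i) (nhds x) (nhds (x i)) :=
      (continuous_apply i).tendsto x
    rw [nhds_discrete (Fin d)] at hc
    exact tendsto_pure.mp hc
  filter_upwards [hev] with y hy
  rw [Real.dist_eq]
  calc |g y - g x| ≤ C * distTheta θ y x := h y x
    _ ≤ |C| * distTheta θ y x :=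
      mul_le_mul_of_nonneg_right (le_abs_self C) (distTheta_nonneg hθ0 _ _)
    _ ≤ |C| * θ ^ n :=
      mul_le_mul_of_nonneg_left (distTheta_le_pow hθ0 hθ1.le hy) (abs_nonneg C)
    _ < ε := hn

lemma continuous_shift {d : ℕ} : Continuous (shift (d := d)) :=
  continuous_pi fun n => continuous_apply (n + 1)

lemma continuous_cons {d : ℕ} (a : Fin d) : Continuous (cons a) := by
  refine continuous_pi fun n => ?_
  cases n with
  | zero => exact continuous_const
  | succ n => exact continuous_apply n

lemma shift_cons {d : ℕ} (a : Fin d) (x : ℕ → Fin d) : shift (cons a x) = x := rfl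

lemma continuous_ruelleSum {d : ℕ} {B g : (ℕ → Fin d) → ℝ} (hB : Continuous B)
    (hg : Continuous g) : Continuous (ruelleSum B g) := by
  unfold ruelleSum
  refine continuous_finsetSum _ fun a _ => ?_
  exact (Real.continuous_exp.comp (hB.comp (continuous_cons a))).mul (hg.comp (continuous_cons a))

lemma integrable_of_continuous {d : ℕ} {g : (ℕ → Fin d) → ℝ} (hg : Continuous g)
    (μ : Measure (ℕ → Fin d)) [IsFiniteMeasure μ] : Integrable g μ :=
  hg.integrable_of_hasCompactSupport (HasCompactSupport.of_compactSpace g)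

/-- The logarithm of a strictly positive Lipschitz function is Lipschitz, by compactness of the
Bernoulli space. -/
lemma log_lipschitz {d : ℕ} {θ : ℝ} (hd : 0 < d) {g : (ℕ → Fin d) → ℝ}
    (hg : Continuous g) (hpos : ∀ x, 0 < g x) {C : ℝ}
    (h : ∀ x y, |g x - g y| ≤ C * distTheta θ x y) :
    ∃ C', ∀ x y, |Real.log (g x) - Real.log (g y)| ≤ C' * distTheta θ x y := by
  have : NeZero d := ⟨hd.ne'⟩
  obtain ⟨x0, -, hx0⟩ := isCompact_univ.exists_isMinOn (Set.univ_nonempty) hg.continuousOn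
  have hmin : ∀ y, g x0 ≤ g y := fun y => hx0 (Set.mem_univ y)
  have hm := hpos x0
  have key : ∀ x y, Real.log (g x) - Real.log (g y) ≤ |g x - g y| / g x0 := by
    intro x y
    rw [← Real.log_div (hpos x).ne' (hpos y).ne']
    calc Real.log (g x / g y) ≤ g x / g y - 1 :=
          Real.log_le_sub_one_of_pos (div_pos (hpos x) (hpos y))
      _ = (g x - g y) / g y := by rw [sub_div, div_self (hpos y).ne']
      _ ≤ |g x - g y| / g y := div_le_div_of_nonneg_right (le_abs_self _) (hpos y).le
      _ ≤ |g x - g y| / g x0 := div_le_div_of_nonneg_left (abs_nonneg _) hm (hmin y)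
  refine ⟨C / g x0, fun x y => ?_⟩
  have h1 : |Real.log (g x) - Real.log (g y)| ≤ |g x - g y| / g x0 := by
    rw [abs_le]
    have := key y x
    rw [abs_sub_comm] at this
    exact ⟨by linarith, key x y⟩
  refine h1.trans ?_
  rw [div_mul_eq_mul_div]
  exact div_le_div_of_nonneg_right (h x y) hm.le

/-! ### Invariant measures -/

/-- A fixed point of the dual of a normalized Ruelle operator is shift invariant, because
`𝓛_B (g∘σ) = g`. -/
lemma integral_comp_shift {d : ℕ} {B : (ℕ → Fin d) → ℝ}
    (hnorm : ∀ x, ∑ a : Fin d, Real.exp (B (cons a x)) = 1)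
    {μ : Measure (ℕ → Fin d)}
    (hμ : ∀ g : C((ℕ → Fin d), ℝ), ∫ x, ruelleSum B g x ∂μ = ∫ x, g x ∂μ)
    {g : (ℕ → Fin d) → ℝ} (hg : Continuous g) :
    ∫ x, g (shift x) ∂μ = ∫ x, g x ∂μ := by
  have h := hμ ⟨fun x => g (shift x), hg.comp continuous_shift⟩
  simp only [ContinuousMap.coe_mk] at h
  rw [← h]
  congr 1
  ext x
  simp only [ruelleSum, shift_cons]
  rw [← Finset.sum_mul, hnorm, one_mul]

lemma integral_coboundary {d : ℕ} {B : (ℕ → Fin d) → ℝ}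
    (hnorm : ∀ x, ∑ a : Fin d, Real.exp (B (cons a x)) = 1)
    {μ : Measure (ℕ → Fin d)} [IsProbabilityMeasure μ]
    (hμ : ∀ g : C((ℕ → Fin d), ℝ), ∫ x, ruelleSum B g x ∂μ = ∫ x, g x ∂μ)
    {g : (ℕ → Fin d) → ℝ} (hg : Continuous g) :
    ∫ x, (g (shift x) - g x) ∂μ = 0 := by
  have hgs : Continuous fun x => g (shift x) := hg.comp continuous_shift
  rw [integral_sub (integrable_of_continuous hgs μ) (integrable_of_continuous hg μ), integral_comp_shift hnorm hμ hg, sub_self]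

/-- The Ruelle operator as a linear endomorphism of `C(X,ℝ)`. -/
def ruelleLin {d : ℕ} (B : (ℕ → Fin d) → ℝ) (hB : Continuous B) :
    C((ℕ → Fin d), ℝ) →ₗ[ℝ] C((ℕ → Fin d), ℝ) where
  toFun g := ⟨ruelleSum B g, continuous_ruelleSum hB g.continuous⟩
  map_add' g h := by
    ext x
    simp [ruelleSum, mul_add, Finset.sum_add_distrib]
  map_smul' c g := by
    ext x
    simp only [ruelleSum, ContinuousMap.coe_mk, ContinuousMap.coe_smul, Pi.smul_apply,
      smul_eq_mul, RingHom.id_apply, Finset.mul_sum]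
    exact Finset.sum_congr rfl fun a _ => by ring

/-- The `n`-th Cesàro mean of `k ↦ (𝓛_B^k g)(x₀)`, averaged over `k ≤ n`. -/
def cesaro {d : ℕ} (B : (ℕ → Fin d) → ℝ) (hB : Continuous B) (x0 : ℕ → Fin d) (n : ℕ)
    (g : C((ℕ → Fin d), ℝ)) : ℝ :=
  ((n : ℝ) + 1)⁻¹ * ∑ k ∈ Finset.range (n + 1), (((ruelleLin B hB) ^ k) g) x0

/-- Existence of a fixed probability of the dual of a normalized Ruelle operator. -/
theorem exists_invariant_probability {d : ℕ} (hd : 0 < d) {B : (ℕ → Fin d) → ℝ}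
    (hB : Continuous B) (hnorm : ∀ x, ∑ a : Fin d, Real.exp (B (cons a x)) = 1) :
    ∃ μ : Measure (ℕ → Fin d), IsProbabilityMeasure μ ∧
      ∀ g : C((ℕ → Fin d), ℝ), ∫ x, ruelleSum B g x ∂μ = ∫ x, g x ∂μ := by
  have : NeZero d := ⟨hd.ne'⟩
  let x0 : ℕ → Fin d := fun _ => 0
  set L := ruelleLin B hB with hL
  have hLapp : ∀ g x, L g x = ruelleSum B g x := fun g x => rfl
  have hLone : L 1 = 1 := by
    ext x
    simp [hLapp, ruelleSum, hnorm]
  have hLmono : ∀ g h : C((ℕ → Fin d), ℝ), g ≤ h → L g ≤ L h := by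
    intro g h hgh x
    change ruelleSum B g x ≤ ruelleSum B h x
    exact Finset.sum_le_sum fun a _ => mul_le_mul_of_nonneg_left (hgh _) (Real.exp_nonneg _)
  have hpone : ∀ k : ℕ, (L ^ k) 1 = 1 := by
    intro k
    induction k with
    | zero => simp
    | succ k ih => rw [pow_succ, Module.End.mul_apply, hLone, ih]
  have hpmono : ∀ k : ℕ, ∀ g h : C((ℕ → Fin d), ℝ), g ≤ h → (L ^ k) g ≤ (L ^ k) h := by
    intro k
    induction k with
    | zero => intro g h hgh; simpa using hgh
    | succ k ih =>
      intro g h hgh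
      rw [pow_succ, Module.End.mul_apply, Module.End.mul_apply]
      exact ih _ _ (hLmono _ _ hgh)
  have hpbound : ∀ k : ℕ, ∀ g : C((ℕ → Fin d), ℝ), |((L ^ k) g) x0| ≤ ‖g‖ := by
    intro k g
    have h1 : g ≤ ‖g‖ • (1 : C((ℕ → Fin d), ℝ)) := fun x => by
      simpa using (le_abs_self _).trans (g.norm_coe_le_norm x)
    have h2 : (-‖g‖) • (1 : C((ℕ → Fin d), ℝ)) ≤ g := fun x => by
      simpa using (abs_le.mp (g.norm_coe_le_norm x)).1
    have h3 : ((L ^ k) g) x0 ≤ ((L ^ k) (‖g‖ • (1 : C((ℕ → Fin d), ℝ)))) x0 :=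
      hpmono k _ _ h1 x0
    have h4 : ((L ^ k) ((-‖g‖) • (1 : C((ℕ → Fin d), ℝ)))) x0 ≤ ((L ^ k) g) x0 :=
      hpmono k _ _ h2 x0
    rw [map_smul, hpone] at h3 h4
    simp only [ContinuousMap.coe_smul, Pi.smul_apply, ContinuousMap.one_apply, smul_eq_mul,
      mul_one] at h3 h4
    exact abs_le.mpr ⟨h4, h3⟩
  have hcb : ∀ n g, |cesaro B hB x0 n g| ≤ ‖g‖ := by
    intro n g
    have hn : (0 : ℝ) < (n : ℝ) + 1 := by positivity
    rw [cesaro, abs_mul, abs_of_pos (inv_pos.mpr hn), inv_mul_eq_div, div_le_iff₀ hn]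
    calc |∑ k ∈ Finset.range (n + 1), ((L ^ k) g) x0|
        ≤ ∑ k ∈ Finset.range (n + 1), |((L ^ k) g) x0| := Finset.abs_sum_le_sum_abs _ _
      _ ≤ ∑ k ∈ Finset.range (n + 1), ‖g‖ := Finset.sum_le_sum fun k _ => hpbound k g
      _ = ‖g‖ * (n + 1) := by simp; ring
  -- A free ultrafilter on `ℕ` selects a limit of the bounded sequence of Cesàro means.
  have hex : ∀ g, ∃ l : ℝ, Tendsto (fun n => cesaro B hB x0 n g) (hyperfilter ℕ) (nhds l) := by
    intro g
    have hc : IsCompact (Set.Icc (-‖g‖) ‖g‖) := isCompact_Icc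
    obtain ⟨l, -, hl⟩ := isCompact_iff_ultrafilter_le_nhds.mp hc
      ((hyperfilter ℕ).map fun n => cesaro B hB x0 n g) (by
        rw [Filter.le_principal_iff, Ultrafilter.mem_coe, Ultrafilter.mem_map]
        exact Filter.Eventually.of_forall (f := (hyperfilter ℕ : Filter ℕ))
          fun n => abs_le.mp (hcb n g))
    exact ⟨l, hl⟩
  choose Λ hΛ using hex
  have hΛinv : ∀ g, Λ (L g) = Λ g := by
    intro g
    have hdiff : Tendsto (fun n => cesaro B hB x0 n (L g) - cesaro B hB x0 n g)
        (hyperfilter ℕ) (nhds 0) := by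
      have h0 : Tendsto (fun n : ℕ => (2 * ‖g‖) * (1 / ((n : ℝ) + 1))) atTop (nhds 0) := by
        simpa using (tendsto_one_div_add_atTop_nhds_zero_nat (𝕜 := ℝ)).const_mul (2 * ‖g‖)
      refine squeeze_zero_norm (fun n => ?_) (h0.mono_left Nat.hyperfilter_le_atTop)
      have hn : (0 : ℝ) < (n : ℝ) + 1 := by positivity
      -- The two sums telescope to their first and last terms.
      have htel : cesaro B hB x0 n (L g) - cesaro B hB x0 n g
          = ((n : ℝ) + 1)⁻¹ * (((L ^ (n + 1)) g) x0 - ((L ^ 0) g) x0) := by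
        rw [cesaro, cesaro, ← mul_sub, ← Finset.sum_sub_distrib,
          ← Finset.sum_range_sub (fun k => ((L ^ k) g) x0)]
        congr 1
      rw [htel, Real.norm_eq_abs, abs_mul, abs_of_pos (inv_pos.mpr hn), one_div, mul_comm]
      refine mul_le_mul_of_nonneg_right ?_ (inv_pos.mpr hn).le
      have h1 := hpbound (n + 1) g
      have h2 := hpbound 0 g
      have h3 := abs_sub (((L ^ (n + 1)) g) x0) (((L ^ 0) g) x0)
      linarith
    have := tendsto_nhds_unique ((hΛ (L g)).sub (hΛ g)) hdiff
    linarith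
  have hΛone : Λ 1 = 1 := by
    refine tendsto_nhds_unique (hΛ 1) ?_
    have : (fun n => cesaro B hB x0 n 1) = fun _ => (1 : ℝ) := by
      funext n
      have hn : (n : ℝ) + 1 ≠ 0 := by positivity
      simp only [cesaro, ← hL, hpone]
      simp [hn]
    rw [this]
    exact tendsto_const_nhds
  let toC : CompactlySupportedContinuousMap (ℕ → Fin d) ℝ → C((ℕ → Fin d), ℝ) :=
    fun g => g.toContinuousMap
  let Λ' : CompactlySupportedContinuousMap (ℕ → Fin d) ℝ →ₚ[ℝ] ℝ :=
    { toFun := fun g => Λ (toC g)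
      map_add' := fun g h => by
        refine tendsto_nhds_unique (hΛ _) ?_
        convert (hΛ (toC g)).add (hΛ (toC h)) using 2 with n
        have : toC (g + h) = toC g + toC h := rfl
        rw [this]
        simp only [cesaro, map_add, ContinuousMap.add_apply, Finset.sum_add_distrib, mul_add]
      map_smul' := fun c g => by
        refine tendsto_nhds_unique (hΛ _) ?_
        rw [RingHom.id_apply, smul_eq_mul]
        convert (hΛ (toC g)).const_mul c using 2 with n
        have : toC (c • g) = c • toC g := rfl
        rw [this]
        simp only [cesaro, map_smul, ContinuousMap.coe_smul, Pi.smul_apply, smul_eq_mul,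
          ← Finset.mul_sum]
        ring
      monotone' := fun g h hgh => by
        refine le_of_tendsto_of_tendsto' (hΛ _) (hΛ _) fun n => ?_
        unfold cesaro
        refine mul_le_mul_of_nonneg_left ?_ (by positivity)
        exact Finset.sum_le_sum fun k _ => hpmono k _ _ hgh x0 }
  have hint : ∀ g : C((ℕ → Fin d), ℝ), ∫ x, g x ∂(RealRMK.rieszMeasure Λ') = Λ g := fun g =>
    RealRMK.integral_rieszMeasure Λ' (CompactlySupportedContinuousMap.continuousMapEquiv g)
  refine ⟨RealRMK.rieszMeasure Λ', ⟨?_⟩, fun g => ?_⟩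
  · have h1 := hint 1
    rw [hΛone] at h1
    simp only [ContinuousMap.one_apply, integral_const, smul_eq_mul, mul_one] at h1
    exact (ENNReal.toReal_eq_one_iff _).mp h1
  · have := hint (L g)
    rw [hΛinv, ← hint g] at this
    exact this

/-- The probability with density proportional to `1/γ`. -/
lemma exists_density_probability {d : ℕ} {γ : (ℕ → Fin d) → ℝ} (hγ : Continuous γ)
    (hpos : ∀ x, 0 < γ x) (μ : Measure (ℕ → Fin d)) [IsProbabilityMeasure μ] :
    ∃ μ2 : Measure (ℕ → Fin d), IsProbabilityMeasure μ2 ∧ ∀ g : C((ℕ → Fin d), ℝ),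
      ∫ x, g x ∂μ2 = (∫ x, g x / γ x ∂μ) / ∫ x, (γ x)⁻¹ ∂μ := by
  have hinv : Continuous fun x => (γ x)⁻¹ := hγ.inv₀ fun x => (hpos x).ne'
  set c := ∫ x, (γ x)⁻¹ ∂μ with hc
  have hcpos : 0 < c := by
    rw [hc, integral_pos_iff_support_of_nonneg (fun x => (inv_pos.mpr (hpos x)).le)
      (integrable_of_continuous hinv μ)]
    have : Function.support (fun x => (γ x)⁻¹) = Set.univ := by
      ext x; simp [(hpos x).ne']
    rw [this]; simp
  have hdm : Measurable fun x => ENNReal.ofReal ((γ x)⁻¹ / c) :=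
    (hinv.div_const c).measurable.ennreal_ofReal
  have hint : ∀ g : (ℕ → Fin d) → ℝ,
      ∫ x, g x ∂(μ.withDensity fun x => ENNReal.ofReal ((γ x)⁻¹ / c))
        = (∫ x, g x / γ x ∂μ) / c := by
    intro g
    rw [integral_withDensity_eq_integral_toReal_smul hdm (by simp), ← integral_div]
    congr 1
    ext x
    rw [ENNReal.toReal_ofReal (div_nonneg (inv_pos.mpr (hpos x)).le hcpos.le), smul_eq_mul]
    ring
  refine ⟨_, ⟨?_⟩, fun g => hint g⟩
  have h1 := hint fun _ => 1
  simp only [one_div, ← hc, div_self hcpos.ne', integral_const, smul_eq_mul, mul_one] at h1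
  exact (ENNReal.toReal_eq_one_iff _).mp h1

/-! ### The entropy inequality -/

/-- The defect `H(Ã,γ̃) + ∫ V - λ`, rewritten as an integral against `μ_Ã`. -/
lemma relEnt_add_integral_sub {d : ℕ} {A V At γt : (ℕ → Fin d) → ℝ} (lam : ℝ)
    (hA : Continuous A) (hV : Continuous V) (hAt : Continuous At) (hγ : Continuous γt)
    (hpos : ∀ x, 0 < γt x) {μA μ2 : Measure (ℕ → Fin d)} [IsProbabilityMeasure μ2]
    (h2 : ∀ g : C((ℕ → Fin d), ℝ),
      ∫ x, g x ∂μ2 = (∫ x, g x / γt x ∂μA) / ∫ x, (γt x)⁻¹ ∂μA) :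
    relEnt A At γt μ2 + ∫ x, V x ∂μ2 - lam =
      (∫ x, (1 - gammaV V lam x / γt x + (A x - At x - Real.log (γt (shift x)))) ∂μA)
        / ∫ x, (γt x)⁻¹ ∂μA := by
  have hlog : Continuous fun x => Real.log (γt (shift x)) :=
    (hγ.comp continuous_shift).log fun x => (hpos _).ne'
  have c1 : Continuous fun x => γt x - 1 := by fun_prop
  have c2 : Continuous fun x => γt x * (A x - At x - Real.log (γt (shift x))) := by fun_prop
  have c12 : Continuous fun x =>
      (γt x - 1) + γt x * (A x - At x - Real.log (γt (shift x))) := c1.add c2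
  have c123 : Continuous fun x =>
      (γt x - 1) + γt x * (A x - At x - Real.log (γt (shift x))) + V x := c12.add hV
  have h := h2 ⟨fun x => (γt x - 1) + γt x * (A x - At x - Real.log (γt (shift x))) + V x - lam,
    by fun_prop⟩
  simp only [ContinuousMap.coe_mk] at h
  rw [integral_sub (integrable_of_continuous c123 μ2) (integrable_const _),
    integral_add (integrable_of_continuous c12 μ2) (integrable_of_continuous hV μ2),
    integral_add (integrable_of_continuous c1 μ2) (integrable_of_continuous c2 μ2)] at h
  simp only [integral_const, probReal_univ, one_smul] at h
  rw [relEnt, h]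
  congr 2
  ext x
  have := (hpos x).ne'
  rw [gammaV]
  field_simp
  ring

lemma gammaV_pos {d : ℕ} (hd : 0 < d) {A V F : (ℕ → Fin d) → ℝ} {lam : ℝ}
    (hFpos : ∀ x, 0 < F x) (heig : ∀ x, ruelleSum A F x = (1 - V x + lam) * F x)
    (x : ℕ → Fin d) : 0 < gammaV V lam x := by
  have : NeZero d := ⟨hd.ne'⟩
  have h : 0 < ruelleSum A F x :=
    Finset.sum_pos (fun a _ => mul_pos (Real.exp_pos _) (hFpos _)) Finset.univ_nonempty
  rw [heig] at h
  exact pos_of_mul_pos_left h (hFpos x).le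

/-- The eigenvalue equation says exactly that `B_V` is normalized. -/
lemma BV_normalized {d : ℕ} (hd : 0 < d) {A V F : (ℕ → Fin d) → ℝ} {lam : ℝ}
    (hFpos : ∀ x, 0 < F x) (heig : ∀ x, ruelleSum A F x = (1 - V x + lam) * F x)
    (x : ℕ → Fin d) : ∑ a : Fin d, Real.exp (BV A V lam F (cons a x)) = 1 := by
  have hγ := gammaV_pos hd hFpos heig x
  have hterm : ∀ a : Fin d, Real.exp (BV A V lam F (cons a x))
      = Real.exp (A (cons a x)) * F (cons a x) / F x / gammaV V lam x := by
    intro a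
    rw [BV, shift_cons, Real.exp_sub, Real.exp_sub, Real.exp_add, Real.exp_log (hFpos _),
      Real.exp_log (hFpos _), Real.exp_log hγ]
  simp only [hterm]
  rw [← Finset.sum_div, ← Finset.sum_div]
  have h := heig x
  rw [ruelleSum] at h
  have hF := (hFpos x).ne'
  rw [h, mul_div_assoc, div_self hF, mul_one]
  exact div_self hγ.ne'

/-- Nonnegativity of relative entropy: for normalized potentials `B`, `C` and a fixed probability
`μ` of the dual of `𝓛_B`, `∫ (C - B) dμ ≤ 0`. -/
lemma integral_sub_nonpos {d : ℕ} {B C : (ℕ → Fin d) → ℝ} (hB : Continuous B)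
    (hC : Continuous C)
    (hBn : ∀ x, ∑ a : Fin d, Real.exp (B (cons a x)) = 1)
    (hCn : ∀ x, ∑ a : Fin d, Real.exp (C (cons a x)) = 1)
    {μ : Measure (ℕ → Fin d)}
    (hμ : ∀ g : C((ℕ → Fin d), ℝ), ∫ x, ruelleSum B g x ∂μ = ∫ x, g x ∂μ) :
    ∫ x, (C x - B x) ∂μ ≤ 0 := by
  have h := hμ ⟨fun x => C x - B x, hC.sub hB⟩
  simp only [ContinuousMap.coe_mk] at h
  rw [← h]
  refine integral_nonpos fun x => ?_
  calc ruelleSum B (fun x => C x - B x) x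
      ≤ ∑ a : Fin d, (Real.exp (C (cons a x)) - Real.exp (B (cons a x))) := by
        refine Finset.sum_le_sum fun a _ => ?_
        have h1 := Real.add_one_le_exp (C (cons a x) - B (cons a x))
        have h2 := Real.exp_pos (B (cons a x))
        have h3 : Real.exp (C (cons a x))
            = Real.exp (B (cons a x)) * Real.exp (C (cons a x) - B (cons a x)) := by
          rw [← Real.exp_add]; congr 1; ring
        rw [h3]
        nlinarith
    _ = 0 := by rw [Finset.sum_sub_distrib, hBn, hCn, sub_self]

/-- **Variational principle for the pressure.** -/
theorem stmt_9 (d : ℕ) (hd : 2 ≤ d) (θ : ℝ) (hθ0 : 0 < θ) (hθ1 : θ ≤ 1 / 2)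
    (A V : (ℕ → Fin d) → ℝ)
    (CA : ℝ) (hALip : ∀ x y, |A x - A y| ≤ CA * distTheta θ x y)
    (hAnorm : ∀ x, ∑ a : Fin d, Real.exp (A (cons a x)) = 1)
    (CV : ℝ) (hVLip : ∀ x y, |V x - V y| ≤ CV * distTheta θ x y)
    (lam : ℝ) (F : C((ℕ → Fin d), ℝ)) (hFpos : ∀ x, 0 < F x)
    (CF : ℝ) (hFLip : ∀ x y, |F x - F y| ≤ CF * distTheta θ x y)
    (heig : ∀ x, ruelleSum A F x = (1 - V x + lam) * F x) :
    -- (i) for every admissible pair `(Ã, γ̃)` : `H(Ã,γ̃) + ∫ V dμ_{Ã,γ̃} ≤ λ`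
    (∀ (At : (ℕ → Fin d) → ℝ) (CAt : ℝ),
      (∀ x y, |At x - At y| ≤ CAt * distTheta θ x y) →
      (∀ x, ∑ a : Fin d, Real.exp (At (cons a x)) = 1) →
      ∀ γt : (ℕ → Fin d) → ℝ, Continuous γt → (∀ x, 0 < γt x) →
      ∀ μA : Measure (ℕ → Fin d), IsProbabilityMeasure μA →
        (∀ g : C((ℕ → Fin d), ℝ), ∫ x, ruelleSum At g x ∂μA = ∫ x, g x ∂μA) →
      ∀ μ2 : Measure (ℕ → Fin d), IsProbabilityMeasure μ2 →
        (∀ g : C((ℕ → Fin d), ℝ),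
          ∫ x, g x ∂μ2 = (∫ x, g x / γt x ∂μA) / ∫ x, (γt x)⁻¹ ∂μA) →
      relEnt A At γt μ2 + ∫ x, V x ∂μ2 ≤ lam) ∧
    -- (ii) equality for `Ã = B_V`, `γ̃ = γ_V`
    (∀ μB : Measure (ℕ → Fin d), IsProbabilityMeasure μB →
      (∀ g : C((ℕ → Fin d), ℝ), ∫ x, ruelleSum (BV A V lam F) g x ∂μB = ∫ x, g x ∂μB) →
      ∀ μ2 : Measure (ℕ → Fin d), IsProbabilityMeasure μ2 →
        (∀ g : C((ℕ → Fin d), ℝ),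
          ∫ x, g x ∂μ2 = (∫ x, g x / gammaV V lam x ∂μB) / ∫ x, (gammaV V lam x)⁻¹ ∂μB) →
      relEnt A (BV A V lam F) (gammaV V lam) μ2 + ∫ x, V x ∂μ2 = lam) ∧
    -- hence the pressure equals `λ`
    sSup {p : ℝ | ∃ (At : (ℕ → Fin d) → ℝ) (CAt : ℝ) (γt : (ℕ → Fin d) → ℝ)
        (μA μ2 : Measure (ℕ → Fin d)),
      (∀ x y, |At x - At y| ≤ CAt * distTheta θ x y) ∧
      (∀ x, ∑ a : Fin d, Real.exp (At (cons a x)) = 1) ∧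
      Continuous γt ∧ (∀ x, 0 < γt x) ∧
      IsProbabilityMeasure μA ∧
      (∀ g : C((ℕ → Fin d), ℝ), ∫ x, ruelleSum At g x ∂μA = ∫ x, g x ∂μA) ∧
      IsProbabilityMeasure μ2 ∧
      (∀ g : C((ℕ → Fin d), ℝ),
        ∫ x, g x ∂μ2 = (∫ x, g x / γt x ∂μA) / ∫ x, (γt x)⁻¹ ∂μA) ∧
      p = relEnt A At γt μ2 + ∫ x, V x ∂μ2} = lam := by
  have hd0 : 0 < d := by omega
  have hθ1' : θ < 1 := by linarith
  have hA : Continuous A := continuous_of_distTheta hθ0 hθ1' hALip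
  have hV : Continuous V := continuous_of_distTheta hθ0 hθ1' hVLip
  have hF : Continuous F := F.continuous
  have hγc : Continuous (gammaV V lam) := by unfold gammaV; fun_prop
  have hγpos : ∀ x, 0 < gammaV V lam x := gammaV_pos hd0 hFpos heig
  have hBn := BV_normalized hd0 hFpos heig
  have hlogF : Continuous fun x => Real.log (F x) := hF.log fun x => (hFpos x).ne'
  have hlogγ : Continuous fun x => Real.log (gammaV V lam x) := hγc.log fun x => (hγpos x).ne'
  have hlogFs : Continuous fun x => Real.log (F (shift x)) := hlogF.comp continuous_shift
  have hlogγs : Continuous fun x => Real.log (gammaV V lam (shift x)) :=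
    hlogγ.comp continuous_shift
  have hBc : Continuous (BV A V lam F) := by unfold BV; fun_prop
  have hi : ∀ (At : (ℕ → Fin d) → ℝ) (CAt : ℝ),
      (∀ x y, |At x - At y| ≤ CAt * distTheta θ x y) →
      (∀ x, ∑ a : Fin d, Real.exp (At (cons a x)) = 1) →
      ∀ γt : (ℕ → Fin d) → ℝ, Continuous γt → (∀ x, 0 < γt x) →
      ∀ μA : Measure (ℕ → Fin d), IsProbabilityMeasure μA →
        (∀ g : C((ℕ → Fin d), ℝ), ∫ x, ruelleSum At g x ∂μA = ∫ x, g x ∂μA) →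
      ∀ μ2 : Measure (ℕ → Fin d), IsProbabilityMeasure μ2 →
        (∀ g : C((ℕ → Fin d), ℝ),
          ∫ x, g x ∂μ2 = (∫ x, g x / γt x ∂μA) / ∫ x, (γt x)⁻¹ ∂μA) →
      relEnt A At γt μ2 + ∫ x, V x ∂μ2 ≤ lam := by
    intro At CAt hAtLip hAtn γt hγtc hγtpos μA hμA hinv μ2 hμ2 h2
    have hAt : Continuous At := continuous_of_distTheta hθ0 hθ1' hAtLip
    have hlogt : Continuous fun x => Real.log (γt x) := hγtc.log fun x => (hγtpos x).ne'
    have hlogts : Continuous fun x => Real.log (γt (shift x)) := hlogt.comp continuous_shift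
    rw [← sub_nonpos, relEnt_add_integral_sub lam hA hV hAt hγtc hγtpos h2]
    refine div_nonpos_of_nonpos_of_nonneg ?_
      (integral_nonneg fun x => (inv_pos.mpr (hγtpos x)).le)
    -- The coboundary of `φ` absorbs the terms in `F` and `γ_V` and the shift of `γ̃`.
    let φ : (ℕ → Fin d) → ℝ :=
      fun x => Real.log (F x) + Real.log (gammaV V lam x) - Real.log (γt x)
    have hφ : Continuous φ := (hlogF.add hlogγ).sub hlogt
    have hφs : Continuous fun x => φ (shift x) := hφ.comp continuous_shift
    have hBA : Continuous fun x => BV A V lam F x - At x := hBc.sub hAt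
    have hcob : Continuous fun x => φ (shift x) - φ x := hφs.sub hφ
    have hdiv : Continuous fun x => gammaV V lam x / γt x :=
      hγc.div hγtc fun x => (hγtpos x).ne'
    calc ∫ x, (1 - gammaV V lam x / γt x + (A x - At x - Real.log (γt (shift x)))) ∂μA
        ≤ ∫ x, ((BV A V lam F x - At x) + (φ (shift x) - φ x)) ∂μA := by
          refine integral_mono (integrable_of_continuous (by fun_prop) μA)
            (integrable_of_continuous (hBA.add hcob) μA) fun x => ?_
          have h := Real.log_le_sub_one_of_pos (div_pos (hγpos x) (hγtpos x))
          rw [Real.log_div (hγpos x).ne' (hγtpos x).ne'] at h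
          simp only [φ, BV]
          linarith
      _ = ∫ x, (BV A V lam F x - At x) ∂μA := by
          rw [integral_add (integrable_of_continuous hBA μA)
            (integrable_of_continuous hcob μA), integral_coboundary hAtn hinv hφ, add_zero]
      _ ≤ 0 := integral_sub_nonpos hAt hBc hAtn hBn hinv
  have hii : ∀ μB : Measure (ℕ → Fin d), IsProbabilityMeasure μB →
      (∀ g : C((ℕ → Fin d), ℝ), ∫ x, ruelleSum (BV A V lam F) g x ∂μB = ∫ x, g x ∂μB) →
      ∀ μ2 : Measure (ℕ → Fin d), IsProbabilityMeasure μ2 →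
        (∀ g : C((ℕ → Fin d), ℝ),
          ∫ x, g x ∂μ2 = (∫ x, g x / gammaV V lam x ∂μB) / ∫ x, (gammaV V lam x)⁻¹ ∂μB) →
      relEnt A (BV A V lam F) (gammaV V lam) μ2 + ∫ x, V x ∂μ2 = lam := by
    intro μB hμB hinv μ2 hμ2 h2
    rw [← sub_eq_zero, relEnt_add_integral_sub lam hA hV hBc hγc hγpos h2]
    have hzero := integral_coboundary hBn hinv hlogF
    have hcongr : ∀ x, 1 - gammaV V lam x / gammaV V lam x
        + (A x - BV A V lam F x - Real.log (gammaV V lam (shift x)))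
        = Real.log (F (shift x)) - Real.log (F x) := by
      intro x
      rw [div_self (hγpos x).ne', BV]
      ring
    simp only [hcongr]
    rw [hzero, zero_div]
  refine ⟨hi, hii, ?_⟩
  apply IsGreatest.csSup_eq
  constructor
  · obtain ⟨μB, hμB, hinv⟩ := exists_invariant_probability hd0 hBc hBn
    obtain ⟨μ2, hμ2, h2⟩ := exists_density_probability hγc hγpos μB
    have hγLip : ∀ x y, |gammaV V lam x - gammaV V lam y| ≤ CV * distTheta θ x y := by
      intro x y
      have : gammaV V lam x - gammaV V lam y = -(V x - V y) := by simp only [gammaV]; ring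
      rw [this, abs_neg]
      exact hVLip x y
    obtain ⟨C1, hC1⟩ := log_lipschitz hd0 hF hFpos hFLip
    obtain ⟨C2, hC2⟩ := log_lipschitz hd0 hγc hγpos hγLip
    refine ⟨BV A V lam F, CA + C1 + |C1| * θ⁻¹ + |C2| * θ⁻¹, gammaV V lam, μB, μ2, ?_, hBn, hγc,
      hγpos, hμB, hinv, hμ2, h2, (hii μB hμB hinv μ2 hμ2 h2).symm⟩
    intro x y
    have hs := distTheta_shift_le hθ0 hθ1'.le x y
    have hs0 := distTheta_nonneg hθ0 (shift x) (shift y)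
    have hshift : ∀ C : ℝ, C * distTheta θ (shift x) (shift y)
        ≤ |C| * θ⁻¹ * distTheta θ x y := fun C =>
      calc C * distTheta θ (shift x) (shift y) ≤ |C| * distTheta θ (shift x) (shift y) :=
            mul_le_mul_of_nonneg_right (le_abs_self C) hs0
        _ ≤ |C| * (θ⁻¹ * distTheta θ x y) := mul_le_mul_of_nonneg_left hs (abs_nonneg C)
        _ = |C| * θ⁻¹ * distTheta θ x y := by ring
    have b1 := abs_le.mp (hALip x y)
    have b2 := abs_le.mp (hC1 x y)
    have b3 := abs_le.mp ((hC1 (shift x) (shift y)).trans (hshift C1))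
    have b4 := abs_le.mp ((hC2 (shift x) (shift y)).trans (hshift C2))
    rw [abs_le]
    simp only [BV, add_mul]
    constructor <;> linarith [b1.1, b1.2, b2.1, b2.2, b3.1, b3.2, b4.1, b4.2]
  · rintro p ⟨At, CAt, γt, μA, μ2, h1, h2, h3, h4, h5, h6, h7, h8, rfl⟩
    exact hi At CAt h1 h2 γt h3 h4 μA h5 h6 μ2 h7 h8
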